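/- arXiv:math/0501097 — 8 statements merged into one kernel-verified Lean document; each statement's English description precedes it below -/
import Mathlib

section
/- Let K be a field of characteristic zero, G a subgroup of Σ₃, and A a G-associative K-algebra, i.e. Σ_{σ∈G} ε(σ) A_μ(x_{σ⁻¹(1)}, x_{σ⁻¹(2)}, x_{σ⁻¹(3)}) = 0 for all x₁,x₂,x₃ ∈ A. Then A is Lie-admissible: the commutator bracket [x,y] = x·y − y·x satisfies the Jacobi identity [[x,y],z] + [[y,z],x] + [[z,x],y] = 0 for all x,y,z ∈ A. -/
lemma sum_perm_three {A : Type*} [AddCommGroup A] (f : Equiv.Perm (Fin 3) → A) :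
    ∑ τ, f τ = f 1 + f (Equiv.swap 0 1) + f (Equiv.swap 0 2) + f (Equiv.swap 1 2)
      + f (Equiv.swap 0 1 * Equiv.swap 1 2) + f (Equiv.swap 1 2 * Equiv.swap 0 1) := by
  have : (Finset.univ : Finset (Equiv.Perm (Fin 3))) =
    {1, Equiv.swap 0 1, Equiv.swap 0 2, Equiv.swap 1 2,
      Equiv.swap 0 1 * Equiv.swap 1 2, Equiv.swap 1 2 * Equiv.swap 0 1} := by decide
  rw [this]
  repeat rw [Finset.sum_insert (by decide)]
  rw [Finset.sum_singleton]
  abel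

/-- Every `G`-associative algebra over a field of characteristic zero,
where `G` is a subgroup of `Σ₃`, is Lie-admissible: the commutator bracket satisfies
the Jacobi identity. -/
theorem g_associative_lie_admissible
    (K : Type*) [Field K] [CharZero K]
    (G : Subgroup (Equiv.Perm (Fin 3))) [DecidablePred (· ∈ G)]
    (A : Type*) [NonUnitalNonAssocRing A] [Module K A]
    [SMulCommClass K A A] [IsScalarTower K A A]
    (h : ∀ x : Fin 3 → A,
      ∑ σ : G,
        (Equiv.Perm.sign (σ : Equiv.Perm (Fin 3)) : ℤ) •
          ((x ((σ : Equiv.Perm (Fin 3))⁻¹ 0) * x ((σ : Equiv.Perm (Fin 3))⁻¹ 1))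
              * x ((σ : Equiv.Perm (Fin 3))⁻¹ 2)
            - x ((σ : Equiv.Perm (Fin 3))⁻¹ 0)
              * (x ((σ : Equiv.Perm (Fin 3))⁻¹ 1) * x ((σ : Equiv.Perm (Fin 3))⁻¹ 2))) = 0) :
    ∀ x y z : A,
      ((x * y - y * x) * z - z * (x * y - y * x))
        + ((y * z - z * y) * x - x * (y * z - z * y))
        + ((z * x - x * z) * y - y * (z * x - x * z)) = 0 := by
  intro x y z
  let a : (Fin 3 → A) → A := fun v => (v 0 * v 1) * v 2 - v 0 * (v 1 * v 2)
  let v : Fin 3 → A := ![x, y, z]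
  let f : Equiv.Perm (Fin 3) → A := fun τ => (Equiv.Perm.sign τ : ℤ) • a (v ∘ τ)
  have h1 : ∀ τ : Equiv.Perm (Fin 3), ∑ σ : G, f (τ * (σ : Equiv.Perm (Fin 3))⁻¹) = 0 := by
    intro τ
    have h2 := congrArg (fun t => (Equiv.Perm.sign τ : ℤ) • t) (h (v ∘ τ))
    simp only [Finset.smul_sum, smul_zero, smul_smul] at h2
    rw [← h2]
    refine Finset.sum_congr rfl fun σ _ => ?_
    simp [f, a]
  have h3 : (Fintype.card G : ℕ) • ∑ τ, f τ = 0 := by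
    have : ∑ τ : Equiv.Perm (Fin 3), ∑ σ : G, f (τ * (σ : Equiv.Perm (Fin 3))⁻¹) = 0 :=
      Finset.sum_eq_zero fun τ _ => h1 τ
    rw [Finset.sum_comm] at this
    have h5 : ∀ σ : G, ∑ τ, f (τ * (σ : Equiv.Perm (Fin 3))⁻¹) = ∑ τ, f τ := fun σ =>
      Equiv.sum_comp (Equiv.mulRight (σ : Equiv.Perm (Fin 3))⁻¹) f
    simp only [h5, Finset.sum_const, Finset.card_univ] at this
    exact this
  have h4 : ∑ τ, f τ = 0 := by
    rw [← Nat.cast_smul_eq_nsmul K] at h3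
    exact (smul_eq_zero.mp h3).resolve_left (by exact_mod_cast Fintype.card_ne_zero)
  rw [sum_perm_three] at h4
  have e1 : (Equiv.swap (0 : Fin 3) 1) 2 = 2 := by decide
  have e2 : (Equiv.swap (0 : Fin 3) 2) 1 = 1 := by decide
  have e3 : (Equiv.swap (1 : Fin 3) 2) 0 = 0 := by decide
  have s1 : Equiv.Perm.sign (Equiv.swap (0 : Fin 3) 1) = -1 := by decide
  have s2 : Equiv.Perm.sign (Equiv.swap (0 : Fin 3) 2) = -1 := by decide
  have s3 : Equiv.Perm.sign (Equiv.swap (1 : Fin 3) 2) = -1 := by decide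
  simp [f, a, v, e1, e2, e3, s1, s2, s3] at h4
  rw [← h4]
  simp only [sub_mul, mul_sub]
  abel
end

section
/- Let K be a field of characteristic zero and A a nonassociative K-algebra satisfying (x·y)·z − x·(y·z) = (z·y)·x − z·(y·x) for all x,y,z ∈ A (the G₄-associativity identity). Then A is Lie-admissible: the commutator bracket [x,y] = x·y − y·x satisfies the Jacobi identity [[x,y],z] + [[y,z],x] + [[z,x],y] = 0 for all x,y,z ∈ A. -/
/-- Every `G₄`-associative algebra over a field of characteristic zero,
i.e. satisfying `(x·y)·z − x·(y·z) = (z·y)·x − z·(y·x)`, is Lie-admissible: the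
commutator bracket satisfies the Jacobi identity. -/
theorem g4_associative_lie_admissible
    (K : Type*) [Field K] [CharZero K]
    (A : Type*) [NonUnitalNonAssocRing A] [Module K A]
    [SMulCommClass K A A] [IsScalarTower K A A]
    (h : ∀ x y z : A, (x * y) * z - x * (y * z) = (z * y) * x - z * (y * x)) :
    ∀ x y z : A,
      ((x * y - y * x) * z - z * (x * y - y * x))
        + ((y * z - z * y) * x - x * (y * z - z * y))
        + ((z * x - x * z) * y - y * (z * x - x * z)) = 0 := by
  intro x y z
  have h1 := sub_eq_zero.mpr (h x y z)
  have h2 := sub_eq_zero.mpr (h y z x)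
  have h3 := sub_eq_zero.mpr (h z x y)
  have e := congrArg₂ (· + ·) (congrArg₂ (· + ·) h1 h2) h3
  simp only [add_zero] at e
  rw [← e]
  simp only [sub_mul, mul_sub]
  abel
end

section
/- Let K be a field of characteristic zero, G a subgroup of Σ₃, and (C,Δ) a G-cogebra, i.e. C a K-vector space and Δ : C → C⊗C a linear map with Σ_{σ∈G} ε(σ) Φ_σ∘(Δ⊗Id)∘Δ = Σ_{σ∈G} ε(σ) Φ_σ∘(Id⊗Δ)∘Δ as linear maps C → C⊗C⊗C. Define a multiplication μ on the dual space C* by μ(f,g) = m_K ∘ (f⊗g) ∘ Δ, where m_K : K⊗K → K is the multiplication of K; equivalently μ(f,g)(x) is the scalar obtained by applying f⊗g to Δ(x) and multiplying the components. Then (C*, μ) is a G-associative algebra: Σ_{σ∈G} ε(σ) A_μ(f_{σ⁻¹(1)}, f_{σ⁻¹(2)}, f_{σ⁻¹(3)}) = 0 for all f₁,f₂,f₃ ∈ C*, where A_μ(f,g,h) = μ(μ(f,g),h) − μ(f,μ(g,h)). -/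
open TensorProduct

/-- The multiplication on the dual space of a cogebra `(C, Δ)`:
`μ(f,g) = m_K ∘ (f ⊗ g) ∘ Δ`, where `m_K` is the multiplication of `K`. -/
noncomputable def dualCogebraMul (K : Type*) [Field K] {C : Type*}
    [AddCommGroup C] [Module K C] (Δ : C →ₗ[K] C ⊗[K] C)
    (f g : Module.Dual K C) : Module.Dual K C :=
  LinearMap.mul' K K ∘ₗ TensorProduct.map f g ∘ₗ Δ

noncomputable def tripleFun {K : Type*} [Field K] {C : Type*}
    [AddCommGroup C] [Module K C] (a b c : Module.Dual K C) :
    (C ⊗[K] C) ⊗[K] C →ₗ[K] K :=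
  LinearMap.mul' K K ∘ₗ TensorProduct.map (LinearMap.mul' K K ∘ₗ TensorProduct.map a b) c

theorem dualMul_left {K : Type*} [Field K] {C : Type*}
    [AddCommGroup C] [Module K C] (Δ : C →ₗ[K] C ⊗[K] C) (a b c : Module.Dual K C) :
    dualCogebraMul K Δ (dualCogebraMul K Δ a b) c
      = tripleFun a b c ∘ₗ TensorProduct.map Δ LinearMap.id ∘ₗ Δ := by
  have h : TensorProduct.map (LinearMap.mul' K K ∘ₗ TensorProduct.map a b ∘ₗ Δ) c
      = TensorProduct.map (LinearMap.mul' K K ∘ₗ TensorProduct.map a b) c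
        ∘ₗ TensorProduct.map Δ LinearMap.id := by
    rw [← TensorProduct.map_comp]; rfl
  unfold dualCogebraMul tripleFun
  rw [h]; rfl

theorem dualMul_right {K : Type*} [Field K] {C : Type*}
    [AddCommGroup C] [Module K C] (Δ : C →ₗ[K] C ⊗[K] C) (a b c : Module.Dual K C) :
    dualCogebraMul K Δ a (dualCogebraMul K Δ b c)
      = tripleFun a b c ∘ₗ (TensorProduct.assoc K C C C).symm.toLinearMap
          ∘ₗ TensorProduct.map LinearMap.id Δ ∘ₗ Δ := by
  have h : TensorProduct.map a (LinearMap.mul' K K ∘ₗ TensorProduct.map b c ∘ₗ Δ)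
      = TensorProduct.map a (LinearMap.mul' K K ∘ₗ TensorProduct.map b c)
        ∘ₗ TensorProduct.map LinearMap.id Δ := by
    rw [← TensorProduct.map_comp]; rfl
  have h2 : tripleFun a b c ∘ₗ (TensorProduct.assoc K C C C).symm.toLinearMap
      = LinearMap.mul' K K ∘ₗ TensorProduct.map a (LinearMap.mul' K K ∘ₗ TensorProduct.map b c) := by
    ext x y z
    simp [tripleFun, mul_assoc]
  rw [← LinearMap.comp_assoc, h2]
  unfold dualCogebraMul
  rw [h]; rfl

theorem tripleFun_perm {K : Type*} [Field K] {C : Type*}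
    [AddCommGroup C] [Module K C] (f : Fin 3 → Module.Dual K C)
    (Φ : Equiv.Perm (Fin 3) → ((C ⊗[K] C) ⊗[K] C →ₗ[K] (C ⊗[K] C) ⊗[K] C))
    (hΦ : ∀ (σ : Equiv.Perm (Fin 3)) (x : Fin 3 → C),
      Φ σ ((x 0 ⊗ₜ[K] x 1) ⊗ₜ[K] x 2) = (x (σ⁻¹ 0) ⊗ₜ[K] x (σ⁻¹ 1)) ⊗ₜ[K] x (σ⁻¹ 2))
    (σ : Equiv.Perm (Fin 3)) :
    tripleFun (f (σ 0)) (f (σ 1)) (f (σ 2)) = tripleFun (f 0) (f 1) (f 2) ∘ₗ Φ σ := by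
  ext x y z
  have h := hΦ σ ![x, y, z]
  have h2 := Equiv.prod_comp σ (fun j => f j (![x, y, z] (σ⁻¹ j)))
  simp only [Fin.prod_univ_three, Equiv.Perm.inv_def, Equiv.symm_apply_apply] at h2
  have h' : Φ σ ((x ⊗ₜ[K] y) ⊗ₜ[K] z) = _ := h
  simp only [TensorProduct.AlgebraTensorModule.curry_apply, TensorProduct.curry_apply,
    LinearMap.restrictScalars_self, LinearMap.comp_apply, h']
  simpa [tripleFun, Equiv.Perm.inv_def] using h2

/-- The dual space of a `G`-cogebra `(C, Δ)` is a `G`-associative algebra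
for the multiplication `μ(f,g) = m_K ∘ (f ⊗ g) ∘ Δ`. Here `Φ σ` denotes the permutation
operator on `(C ⊗ C) ⊗ C` with `Φ σ (x₁⊗x₂⊗x₃) = x_{σ⁻¹(1)} ⊗ x_{σ⁻¹(2)} ⊗ x_{σ⁻¹(3)}`,
and the `G`-cogebra condition reads
`∑_{σ∈G} ε(σ) Φ_σ∘(Δ⊗Id)∘Δ = ∑_{σ∈G} ε(σ) Φ_σ∘(Id⊗Δ)∘Δ`. -/
theorem dual_of_g_cogebra_is_g_associative
    (K : Type*) [Field K] [CharZero K]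
    (C : Type*) [AddCommGroup C] [Module K C]
    (G : Subgroup (Equiv.Perm (Fin 3))) [DecidablePred (· ∈ G)]
    (Δ : C →ₗ[K] C ⊗[K] C)
    (Φ : Equiv.Perm (Fin 3) → ((C ⊗[K] C) ⊗[K] C →ₗ[K] (C ⊗[K] C) ⊗[K] C))
    (hΦ : ∀ (σ : Equiv.Perm (Fin 3)) (x : Fin 3 → C),
      Φ σ ((x 0 ⊗ₜ[K] x 1) ⊗ₜ[K] x 2) = (x (σ⁻¹ 0) ⊗ₜ[K] x (σ⁻¹ 1)) ⊗ₜ[K] x (σ⁻¹ 2))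
    (hG : ∑ σ : G,
        (Equiv.Perm.sign (σ : Equiv.Perm (Fin 3)) : ℤ) •
          (Φ σ ∘ₗ TensorProduct.map Δ LinearMap.id ∘ₗ Δ)
      = ∑ σ : G,
        (Equiv.Perm.sign (σ : Equiv.Perm (Fin 3)) : ℤ) •
          (Φ σ ∘ₗ (TensorProduct.assoc K C C C).symm.toLinearMap
            ∘ₗ TensorProduct.map LinearMap.id Δ ∘ₗ Δ)) :
    ∀ f : Fin 3 → Module.Dual K C,
      ∑ σ : G,
        (Equiv.Perm.sign (σ : Equiv.Perm (Fin 3)) : ℤ) •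
          (dualCogebraMul K Δ
              (dualCogebraMul K Δ (f ((σ : Equiv.Perm (Fin 3))⁻¹ 0))
                (f ((σ : Equiv.Perm (Fin 3))⁻¹ 1)))
              (f ((σ : Equiv.Perm (Fin 3))⁻¹ 2))
            - dualCogebraMul K Δ (f ((σ : Equiv.Perm (Fin 3))⁻¹ 0))
              (dualCogebraMul K Δ (f ((σ : Equiv.Perm (Fin 3))⁻¹ 1))
                (f ((σ : Equiv.Perm (Fin 3))⁻¹ 2)))) = 0 := by
  intro f
  have key := congrArg (fun L => tripleFun (f 0) (f 1) (f 2) ∘ₗ L) hG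
  simp only [← LinearMap.compRight_apply K] at key
  simp only [map_sum, map_zsmul] at key
  simp only [LinearMap.compRight_apply] at key
  rw [← Equiv.sum_comp (Equiv.inv G)]
  simp only [Equiv.inv_apply, InvMemClass.coe_inv, inv_inv, Equiv.Perm.sign_inv,
    dualMul_left, dualMul_right, tripleFun_perm f Φ hΦ, smul_sub, Finset.sum_sub_distrib]
  rw [sub_eq_zero]
  exact key
end

section
/- Let K be a field of characteristic zero, G a subgroup of Σ₃, and A a finite-dimensional G-associative K-algebra with multiplication viewed as a linear map μ : A⊗A → A. Define a comultiplication Δ : A* → A*⊗A* as the composition of the transpose μ* : A* → (A⊗A)* with the canonical isomorphism (A⊗A)* ≅ A*⊗A* (which exists since A is finite-dimensional); equivalently, for a basis (e₁,…,eₙ) of A with dual basis (f₁,…,fₙ), Δ(f) = Σ_{i,j} f(eᵢ·eⱼ) fᵢ⊗fⱼ. Then (A*, Δ) is a G-cogebra: Σ_{σ∈G} ε(σ) Φ_σ∘(Δ⊗Id)∘Δ = Σ_{σ∈G} ε(σ) Φ_σ∘(Id⊗Δ)∘Δ as linear maps A* → A*⊗A*⊗A*. -/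
open TensorProduct

set_option synthInstance.maxHeartbeats 1000000
set_option maxHeartbeats 1000000

/-- Evaluation of a triple tensor of functionals. -/
noncomputable def gcEv (K A : Type*) [Field K] [AddCommGroup A] [Module K A] (a b c : A) :
    (Module.Dual K A ⊗[K] Module.Dual K A) ⊗[K] Module.Dual K A →ₗ[K] K :=
  (LinearMap.applyₗ ((a ⊗ₜ[K] b) ⊗ₜ[K] c)) ∘ₗ TensorProduct.dualDistrib K (A ⊗[K] A) A ∘ₗ
    TensorProduct.map (TensorProduct.dualDistrib K A A) LinearMap.id

theorem gcEv_tmul (K A : Type*) [Field K] [AddCommGroup A] [Module K A] (a b c : A)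
    (t : Module.Dual K A ⊗[K] Module.Dual K A) (h : Module.Dual K A) :
    gcEv K A a b c (t ⊗ₜ[K] h) = TensorProduct.dualDistrib K A A t (a ⊗ₜ[K] b) * h c := by
  simp [gcEv]

theorem gc_dd_equiv (K A B : Type*) [Field K] [AddCommGroup A] [Module K A]
    [AddCommGroup B] [Module K B] [FiniteDimensional K A] [FiniteDimensional K B]
    (t : Module.Dual K A ⊗[K] Module.Dual K B) :
    TensorProduct.dualDistribEquiv K A B t = TensorProduct.dualDistrib K A B t := rfl

theorem gcEv_ext (K A : Type*) [Field K] [AddCommGroup A] [Module K A] [FiniteDimensional K A]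
    (s t : (Module.Dual K A ⊗[K] Module.Dual K A) ⊗[K] Module.Dual K A)
    (h : ∀ a b c, gcEv K A a b c s = gcEv K A a b c t) : s = t := by
  apply (TensorProduct.congr (TensorProduct.dualDistribEquiv K A A)
    (LinearEquiv.refl K (Module.Dual K A))).injective
  apply (TensorProduct.dualDistribEquiv K (A ⊗[K] A) A).injective
  apply TensorProduct.ext_threefold
  intro a b c
  exact h a b c

theorem gcEv_assoc (K A : Type*) [Field K] [AddCommGroup A] [Module K A] (a b c : A)
    (f : Module.Dual K A) (s : Module.Dual K A ⊗[K] Module.Dual K A) :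
    gcEv K A a b c ((TensorProduct.assoc K (Module.Dual K A) (Module.Dual K A)
      (Module.Dual K A)).symm (f ⊗ₜ[K] s))
      = f a * TensorProduct.dualDistrib K A A s (b ⊗ₜ[K] c) := by
  induction s with
  | zero => simp
  | tmul x y => simp [gcEv_tmul, mul_assoc]
  | add x y hx hy => simp [TensorProduct.tmul_add, hx, hy, mul_add]

/-- The dual space of a finite-dimensional `G`-associative algebra `A`
carries a `G`-cogebra structure, where the comultiplication `Δ` on `A*` is the transpose
of the multiplication `μ : A ⊗ A → A` composed with the canonical isomorphism
`(A ⊗ A)* ≅ A* ⊗ A*`. Here `Φ σ` denotes the permutation operator on the triple tensor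
product of `A*` with `Φ σ (x₁⊗x₂⊗x₃) = x_{σ⁻¹(1)} ⊗ x_{σ⁻¹(2)} ⊗ x_{σ⁻¹(3)}`. -/
theorem dual_of_g_associative_is_g_cogebra
    (K : Type*) [Field K] [CharZero K]
    (G : Subgroup (Equiv.Perm (Fin 3))) [DecidablePred (· ∈ G)]
    (A : Type*) [NonUnitalNonAssocRing A] [Module K A]
    [SMulCommClass K A A] [IsScalarTower K A A] [FiniteDimensional K A]
    (hA : ∀ x : Fin 3 → A,
      ∑ σ : G,
        (Equiv.Perm.sign (σ : Equiv.Perm (Fin 3)) : ℤ) •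
          ((x ((σ : Equiv.Perm (Fin 3))⁻¹ 0) * x ((σ : Equiv.Perm (Fin 3))⁻¹ 1))
              * x ((σ : Equiv.Perm (Fin 3))⁻¹ 2)
            - x ((σ : Equiv.Perm (Fin 3))⁻¹ 0)
              * (x ((σ : Equiv.Perm (Fin 3))⁻¹ 1) * x ((σ : Equiv.Perm (Fin 3))⁻¹ 2))) = 0)
    (Δ : Module.Dual K A →ₗ[K] Module.Dual K A ⊗[K] Module.Dual K A)
    (hΔ : Δ = (TensorProduct.dualDistribEquiv K A A).symm.toLinearMap
        ∘ₗ (LinearMap.mul' K A).dualMap)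
    (Φ : Equiv.Perm (Fin 3) →
      ((Module.Dual K A ⊗[K] Module.Dual K A) ⊗[K] Module.Dual K A →ₗ[K]
        (Module.Dual K A ⊗[K] Module.Dual K A) ⊗[K] Module.Dual K A))
    (hΦ : ∀ (σ : Equiv.Perm (Fin 3)) (x : Fin 3 → Module.Dual K A),
      Φ σ ((x 0 ⊗ₜ[K] x 1) ⊗ₜ[K] x 2) = (x (σ⁻¹ 0) ⊗ₜ[K] x (σ⁻¹ 1)) ⊗ₜ[K] x (σ⁻¹ 2)) :
    ∑ σ : G,
        (Equiv.Perm.sign (σ : Equiv.Perm (Fin 3)) : ℤ) •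
          (Φ σ ∘ₗ TensorProduct.map Δ LinearMap.id ∘ₗ Δ)
      = ∑ σ : G,
        (Equiv.Perm.sign (σ : Equiv.Perm (Fin 3)) : ℤ) •
          (Φ σ ∘ₗ (TensorProduct.assoc K (Module.Dual K A) (Module.Dual K A)
              (Module.Dual K A)).symm.toLinearMap
            ∘ₗ TensorProduct.map LinearMap.id Δ ∘ₗ Δ) := by
  have hD : ∀ (f : Module.Dual K A) (a b : A),
      TensorProduct.dualDistrib K A A (Δ f) (a ⊗ₜ[K] b) = f (a * b) := by
    intro f a b
    rw [hΔ, ← gc_dd_equiv, LinearMap.comp_apply, LinearEquiv.coe_coe,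
      LinearEquiv.apply_symm_apply, LinearMap.dualMap_apply, LinearMap.mul'_apply]
  have h1 : ∀ (a b c : A) (t : Module.Dual K A ⊗[K] Module.Dual K A),
      gcEv K A a b c (TensorProduct.map Δ LinearMap.id t)
        = TensorProduct.dualDistrib K A A t ((a * b) ⊗ₜ[K] c) := by
    intro a b c t
    induction t with
    | zero => simp
    | tmul x y => simp [gcEv_tmul, hD]
    | add x y hx hy => simp [hx, hy]
  have h2 : ∀ (a b c : A) (t : Module.Dual K A ⊗[K] Module.Dual K A),
      gcEv K A a b c ((TensorProduct.assoc K (Module.Dual K A) (Module.Dual K A)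
        (Module.Dual K A)).symm (TensorProduct.map LinearMap.id Δ t))
        = TensorProduct.dualDistrib K A A t (a ⊗ₜ[K] (b * c)) := by
    intro a b c t
    induction t with
    | zero => simp
    | tmul x y => simp [gcEv_assoc, hD]
    | add x y hx hy => simp [hx, hy]
  have h3 : ∀ (σ : Equiv.Perm (Fin 3)) (x : Fin 3 → A)
      (t : (Module.Dual K A ⊗[K] Module.Dual K A) ⊗[K] Module.Dual K A),
      gcEv K A (x 0) (x 1) (x 2) (Φ σ t) = gcEv K A (x (σ 0)) (x (σ 1)) (x (σ 2)) t := by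
    intro σ x t
    have : gcEv K A (x 0) (x 1) (x 2) ∘ₗ Φ σ = gcEv K A (x (σ 0)) (x (σ 1)) (x (σ 2)) := by
      apply TensorProduct.ext_threefold
      intro f g h
      have e := hΦ σ ![f, g, h]
      have e' : Φ σ ((f ⊗ₜ[K] g) ⊗ₜ[K] h) = _ := e
      rw [LinearMap.comp_apply, e', gcEv_tmul, gcEv_tmul, TensorProduct.dualDistrib_apply,
        TensorProduct.dualDistrib_apply]
      have p := Equiv.prod_comp σ (fun i => (![f, g, h] : Fin 3 → Module.Dual K A) (σ⁻¹ i) (x i))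
      have hinv : ∀ i, σ⁻¹ (σ i) = i := fun i => σ.symm_apply_apply i
      simp only [Fin.prod_univ_three, hinv] at p
      exact p.symm
    exact LinearMap.congr_fun this t
  apply LinearMap.ext
  intro f
  apply gcEv_ext
  intro a b c
  have key := congrArg f (hA ![a, b, c])
  rw [← Equiv.sum_comp (Equiv.inv G)] at key
  rw [← sub_eq_zero]
  simp only [LinearMap.sum_apply, map_sum, LinearMap.smul_apply, LinearMap.map_smul_of_tower,
    LinearMap.comp_apply, LinearEquiv.coe_coe]
  have h3' := fun σ t => h3 σ ![a, b, c] t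
  simp only [Matrix.cons_val_zero, Matrix.cons_val_one, Matrix.cons_val] at h3'
  simp only [h3', h1, h2, hD, ← Finset.sum_sub_distrib, ← smul_sub]
  simpa only [map_sum, map_zsmul, map_sub, map_zero, Equiv.inv_apply, InvMemClass.coe_inv,
    inv_inv, Equiv.Perm.sign_inv] using key
end

section
/- Let K be a field of characteristic zero, G a subgroup of Σ₃, and (C,Δ) a G-cogebra. Let τ : C⊗C → C⊗C be the flip x⊗y ↦ y⊗x and set Δ_L = Δ − τ∘Δ. Then (C,Δ_L) is a Lie cogebra: (1) τ∘Δ_L = −Δ_L, and (2) Φ_v ∘ (Id⊗Δ_L) ∘ Δ_L = 0 as a linear map C → C⊗C⊗C, where Φ_v = Φ_id + Φ_{c₁} + Φ_{c₂} is the sum of the permutation maps associated with the three cyclic permutations of Σ₃. -/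
open TensorProduct

theorem aux_mul {K : Type*} [Field K] {C : Type*} [AddCommGroup C] [Module K C]
    (Φ : Equiv.Perm (Fin 3) → ((C ⊗[K] C) ⊗[K] C →ₗ[K] (C ⊗[K] C) ⊗[K] C))
    (hΦ : ∀ (σ : Equiv.Perm (Fin 3)) (x : Fin 3 → C),
      Φ σ ((x 0 ⊗ₜ[K] x 1) ⊗ₜ[K] x 2) = (x (σ⁻¹ 0) ⊗ₜ[K] x (σ⁻¹ 1)) ⊗ₜ[K] x (σ⁻¹ 2))
    (σ τ : Equiv.Perm (Fin 3)) : Φ σ ∘ₗ Φ τ = Φ (σ * τ) := by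
  apply TensorProduct.ext_threefold
  intro a b c
  have h1 := hΦ τ ![a, b, c]
  have h2 := hΦ (σ * τ) ![a, b, c]
  have h3 := hΦ σ (fun i => ![a, b, c] (τ⁻¹ i))
  have h4 : ((![a, b, c] 0 ⊗ₜ[K] ![a, b, c] 1) ⊗ₜ[K] ![a, b, c] 2) = (a ⊗ₜ[K] b) ⊗ₜ[K] c := rfl
  rw [h4] at h1 h2
  rw [LinearMap.comp_apply, h1, h2, h3]
  simp only [mul_inv_rev, Equiv.Perm.mul_apply]

/-- If `(C, Δ)` is a `G`-cogebra and `Δ_L = Δ − τ∘Δ` (with `τ` the flip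
of `C ⊗ C`), then `(C, Δ_L)` is a Lie cogebra: `τ∘Δ_L = −Δ_L` and
`(Φ_id + Φ_{c₁} + Φ_{c₂}) ∘ (Id ⊗ Δ_L) ∘ Δ_L = 0`, where `c₁, c₂` are the two `3`-cycles
of `Σ₃` and `Φ σ` is the permutation operator on `(C ⊗ C) ⊗ C` with
`Φ σ (x₁⊗x₂⊗x₃) = x_{σ⁻¹(1)} ⊗ x_{σ⁻¹(2)} ⊗ x_{σ⁻¹(3)}`. -/
theorem g_cogebra_gives_lie_cogebra
    (K : Type*) [Field K] [CharZero K]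
    (C : Type*) [AddCommGroup C] [Module K C]
    (G : Subgroup (Equiv.Perm (Fin 3))) [DecidablePred (· ∈ G)]
    (Δ : C →ₗ[K] C ⊗[K] C)
    (Φ : Equiv.Perm (Fin 3) → ((C ⊗[K] C) ⊗[K] C →ₗ[K] (C ⊗[K] C) ⊗[K] C))
    (hΦ : ∀ (σ : Equiv.Perm (Fin 3)) (x : Fin 3 → C),
      Φ σ ((x 0 ⊗ₜ[K] x 1) ⊗ₜ[K] x 2) = (x (σ⁻¹ 0) ⊗ₜ[K] x (σ⁻¹ 1)) ⊗ₜ[K] x (σ⁻¹ 2))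
    (hG : ∑ σ : G,
        (Equiv.Perm.sign (σ : Equiv.Perm (Fin 3)) : ℤ) •
          (Φ σ ∘ₗ TensorProduct.map Δ LinearMap.id ∘ₗ Δ)
      = ∑ σ : G,
        (Equiv.Perm.sign (σ : Equiv.Perm (Fin 3)) : ℤ) •
          (Φ σ ∘ₗ (TensorProduct.assoc K C C C).symm.toLinearMap
            ∘ₗ TensorProduct.map LinearMap.id Δ ∘ₗ Δ))
    (ΔL : C →ₗ[K] C ⊗[K] C)
    (hΔL : ΔL = Δ - (TensorProduct.comm K C C).toLinearMap ∘ₗ Δ) :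
    (TensorProduct.comm K C C).toLinearMap ∘ₗ ΔL = -ΔL ∧
    (Φ 1 + Φ (finRotate 3) + Φ ((finRotate 3) ^ 2))
        ∘ₗ (TensorProduct.assoc K C C C).symm.toLinearMap
        ∘ₗ TensorProduct.map LinearMap.id ΔL ∘ₗ ΔL = 0 := by
  have hmul := aux_mul Φ hΦ
  have hmul' : ∀ σ τ v, Φ σ (Φ τ v) = Φ (σ * τ) v := fun σ τ v => by
    rw [← hmul, LinearMap.comp_apply]
  have hc : ∀ a b c : C, Φ (finRotate 3) ((a ⊗ₜ[K] b) ⊗ₜ[K] c) = (c ⊗ₜ[K] a) ⊗ₜ[K] b := by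
    intro a b c
    have e0 : (finRotate 3)⁻¹ 0 = 2 := by decide
    have e1 : (finRotate 3)⁻¹ 1 = 0 := by decide
    have e2 : (finRotate 3)⁻¹ 2 = 1 := by decide
    have h := hΦ (finRotate 3) ![a, b, c]
    rw [e0, e1, e2] at h
    exact h
  have hs : ∀ a b c : C, Φ (Equiv.swap 1 2) ((a ⊗ₜ[K] b) ⊗ₜ[K] c) = (a ⊗ₜ[K] c) ⊗ₜ[K] b := by
    intro a b c
    have e0 : (Equiv.swap (1 : Fin 3) 2)⁻¹ 0 = 0 := by decide
    have e1 : (Equiv.swap (1 : Fin 3) 2)⁻¹ 1 = 2 := by decide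
    have e2 : (Equiv.swap (1 : Fin 3) 2)⁻¹ 2 = 1 := by decide
    have h := hΦ (Equiv.swap 1 2) ![a, b, c]
    rw [e0, e1, e2] at h
    exact h
  -- the alternator
  let Alt : (C ⊗[K] C) ⊗[K] C →ₗ[K] (C ⊗[K] C) ⊗[K] C :=
    ∑ σ : Equiv.Perm (Fin 3), (Equiv.Perm.sign σ : ℤ) • Φ σ
  have hz1 : ∀ (n : ℤ) (f : (C ⊗[K] C) ⊗[K] C →ₗ[K] (C ⊗[K] C) ⊗[K] C) (v : (C ⊗[K] C) ⊗[K] C),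
      (n • f) v = n • f v := fun n f v => rfl
  have hz2 : ∀ (n : ℤ) (f : C →ₗ[K] (C ⊗[K] C) ⊗[K] C) (v : C),
      (n • f) v = n • f v := fun n f v => rfl
  have hAlt : ∀ (τ : Equiv.Perm (Fin 3)) v, (Equiv.Perm.sign τ : ℤ) • (Alt (Φ τ v)) = Alt v := by
    intro τ v
    have e : Alt v = ∑ σ : Equiv.Perm (Fin 3), (Equiv.Perm.sign (σ * τ) : ℤ) • Φ (σ * τ) v := by
      simp only [Alt, LinearMap.sum_apply, hz1]
      exact (Equiv.sum_comp (Equiv.mulRight τ)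
        (fun σ : Equiv.Perm (Fin 3) => (Equiv.Perm.sign σ : ℤ) • Φ σ v)).symm
    rw [e]
    simp only [Alt, LinearMap.sum_apply, hz1, hmul']
    rcases Int.units_eq_one_or (Equiv.Perm.sign τ) with h | h
    · simp only [h, map_mul, mul_one, Units.val_one, one_zsmul]
    · simp only [h, map_mul, mul_neg, mul_one, Units.val_neg, Units.val_one, neg_zsmul, one_zsmul,
        Finset.sum_neg_distrib]
  have key : ∀ X : C →ₗ[K] (C ⊗[K] C) ⊗[K] C,
      Alt ∘ₗ (∑ σ : G, (Equiv.Perm.sign (σ : Equiv.Perm (Fin 3)) : ℤ) • (Φ σ ∘ₗ X))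
        = (Fintype.card G) • (Alt ∘ₗ X) := by
    intro X
    refine LinearMap.ext fun v => ?_
    simp only [LinearMap.comp_apply, LinearMap.sum_apply, hz2, map_sum, map_zsmul, hAlt]
    rw [Finset.sum_const, Finset.card_univ]
    rfl
  have hAB := congrArg (fun f => Alt ∘ₗ f) hG
  beta_reduce at hAB
  rw [key, key] at hAB
  have hcard : (Fintype.card G : K) ≠ 0 := by
    exact_mod_cast Fintype.card_ne_zero
  rw [← Nat.cast_smul_eq_nsmul K, ← Nat.cast_smul_eq_nsmul K] at hAB
  have hAB' := smul_right_injective _ hcard hAB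
  have L1 : ∀ t : C ⊗[K] C, (TensorProduct.assoc K C C C).symm
      (TensorProduct.map LinearMap.id ((TensorProduct.comm K C C).toLinearMap ∘ₗ Δ) t)
      = Φ (Equiv.swap 1 2) ((TensorProduct.assoc K C C C).symm
        (TensorProduct.map LinearMap.id Δ t)) := by
    intro t
    induction t with
    | zero => simp
    | add x y hx hy => simp only [map_add, hx, hy]
    | tmul x y =>
      simp only [TensorProduct.map_tmul, LinearMap.comp_apply, LinearMap.id_apply]
      induction Δ y with
      | zero => simp
      | add x y hx hy => simp only [map_add, TensorProduct.tmul_add, hx, hy]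
      | tmul u v => simp [hs]
  have L2 : ∀ t : C ⊗[K] C, (TensorProduct.assoc K C C C).symm
      (TensorProduct.map LinearMap.id Δ (TensorProduct.comm K C C t))
      = Φ (finRotate 3) (TensorProduct.map Δ LinearMap.id t) := by
    intro t
    induction t with
    | zero => simp
    | add x y hx hy => simp only [map_add, hx, hy]
    | tmul x y =>
      simp only [TensorProduct.map_tmul, TensorProduct.comm_tmul, LinearMap.id_apply]
      induction Δ x with
      | zero => simp
      | add x y hx hy => simp only [map_add, TensorProduct.tmul_add, TensorProduct.add_tmul, hx, hy]
      | tmul u v => simp [hc]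
  have hcomm : ∀ t : C ⊗[K] C, TensorProduct.comm K C C (TensorProduct.comm K C C t) = t := by
    intro t
    induction t with
    | zero => simp
    | add x y hx hy => simp only [map_add, hx, hy]
    | tmul x y => simp
  refine ⟨?_, ?_⟩
  · subst hΔL
    refine LinearMap.ext fun v => ?_
    simp [hcomm]
  · subst hΔL
    refine LinearMap.ext fun v => ?_
    have h := LinearMap.congr_fun hAB' v
    have hu : (Finset.univ : Finset (Equiv.Perm (Fin 3))) =
        {1, finRotate 3, finRotate 3 ^ 2, Equiv.swap 1 2, finRotate 3 * Equiv.swap 1 2,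
          finRotate 3 ^ 2 * Equiv.swap 1 2} := by decide
    have hA : ∀ w, Alt w = Φ 1 w + Φ (finRotate 3) w + Φ (finRotate 3 ^ 2) w
        - Φ (Equiv.swap 1 2) w - Φ (finRotate 3 * Equiv.swap 1 2) w
        - Φ (finRotate 3 ^ 2 * Equiv.swap 1 2) w := by
      intro w
      have s1 : Equiv.Perm.sign (finRotate 3) = 1 := by decide
      have s2 : Equiv.Perm.sign (Equiv.swap (1 : Fin 3) 2) = -1 := by decide
      simp only [Alt, hu]
      rw [Finset.sum_insert (by decide), Finset.sum_insert (by decide),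
        Finset.sum_insert (by decide), Finset.sum_insert (by decide),
        Finset.sum_insert (by decide), Finset.sum_singleton]
      simp only [map_mul, map_pow, s1, s2, map_one]
      simp only [LinearMap.add_apply, hz1]
      simp
      abel
    have hsplit : TensorProduct.map (LinearMap.id : C →ₗ[K] C)
        (Δ - (TensorProduct.comm K C C).toLinearMap ∘ₗ Δ)
        = TensorProduct.map LinearMap.id Δ
          - TensorProduct.map LinearMap.id ((TensorProduct.comm K C C).toLinearMap ∘ₗ Δ) := by
      ext x y
      simp [TensorProduct.tmul_sub]
    rw [hsplit]
    simp only [LinearMap.comp_apply, LinearMap.sub_apply, LinearMap.add_apply, map_sub,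
      LinearEquiv.coe_coe, LinearMap.zero_apply, L1, L2, hmul'] at h ⊢
    rw [hA, hA] at h
    have p1 : (finRotate 3) ^ 2 * finRotate 3 = 1 := by decide
    have p2 : finRotate 3 * finRotate 3 = finRotate 3 ^ 2 := by decide
    have p3 : Equiv.swap (1 : Fin 3) 2 * finRotate 3 = finRotate 3 ^ 2 * Equiv.swap 1 2 := by decide
    have p4 : finRotate 3 * (finRotate 3 ^ 2 * Equiv.swap 1 2) = Equiv.swap (1 : Fin 3) 2 := by
      decide
    have p5 : finRotate 3 ^ 2 * (finRotate 3 ^ 2 * Equiv.swap 1 2)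
        = finRotate 3 * Equiv.swap (1 : Fin 3) 2 := by
      decide
    simp only [p1, p2, p3, p4, p5, one_mul]
    have h' := sub_eq_zero.mpr h.symm
    rw [← h']
    abel
end

section
/- Let K be a field of characteristic zero and G a subgroup of Σ₃. Let A be a G-associative K-algebra and let B be a G^!-algebra, i.e. an associative K-algebra whose triple products are G-invariant: y₁·y₂·y₃ = y_{σ(1)}·y_{σ(2)}·y_{σ(3)} for all y₁,y₂,y₃ ∈ B and all σ ∈ G. Then the tensor product A⊗B, with multiplication (a₁⊗b₁)·(a₂⊗b₂) = (a₁·a₂)⊗(b₁·b₂), is a G-associative algebra: Σ_{σ∈G} ε(σ) A_μ(u_{σ⁻¹(1)}, u_{σ⁻¹(2)}, u_{σ⁻¹(3)}) = 0 for all u₁,u₂,u₃ ∈ A⊗B. -/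
open TensorProduct


theorem perm3_cases (p : Equiv.Perm (Fin 3)) :
    (p 0 = 0 ∧ p 1 = 1 ∧ p 2 = 2) ∨ (p 0 = 0 ∧ p 1 = 2 ∧ p 2 = 1) ∨
    (p 0 = 1 ∧ p 1 = 0 ∧ p 2 = 2) ∨ (p 0 = 1 ∧ p 1 = 2 ∧ p 2 = 0) ∨
    (p 0 = 2 ∧ p 1 = 0 ∧ p 2 = 1) ∨ (p 0 = 2 ∧ p 1 = 1 ∧ p 2 = 0) := by
  revert p; decide

def asc3 {R : Type*} [NonUnitalNonAssocRing R] (p : Equiv.Perm (Fin 3)) (u : Fin 3 → R) : R :=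
  (u (p 0) * u (p 1)) * u (p 2) - u (p 0) * (u (p 1) * u (p 2))

theorem asc3_update_add {R : Type*} [NonUnitalNonAssocRing R] (p : Equiv.Perm (Fin 3))
    (u : Fin 3 → R) (i : Fin 3) (x y : R) :
    asc3 p (Function.update u i (x + y)) =
      asc3 p (Function.update u i x) + asc3 p (Function.update u i y) := by
  unfold asc3
  rcases perm3_cases p with ⟨h0, h1, h2⟩ | ⟨h0, h1, h2⟩ | ⟨h0, h1, h2⟩ | ⟨h0, h1, h2⟩ |
    ⟨h0, h1, h2⟩ | ⟨h0, h1, h2⟩ <;> rw [h0, h1, h2] <;> fin_cases i <;>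
    simp [Function.update, mul_add, add_mul] <;> abel

theorem asc3_update_zero {R : Type*} [NonUnitalNonAssocRing R] (p : Equiv.Perm (Fin 3))
    (u : Fin 3 → R) (i : Fin 3) : asc3 p (Function.update u i 0) = 0 := by
  have := asc3_update_add p u i 0 0
  rw [add_zero] at this
  exact left_eq_add.mp this

/-- If `A` is a `G`-associative algebra and `B` a `G^!`-algebra (an
associative algebra whose triple products are `G`-invariant), then the tensor product
`A ⊗ B`, with multiplication `(a₁⊗b₁)·(a₂⊗b₂) = (a₁·a₂)⊗(b₁·b₂)`, is `G`-associative. -/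
theorem tensor_g_associative_with_g_shriek
    (K : Type*) [Field K] [CharZero K]
    (G : Subgroup (Equiv.Perm (Fin 3))) [DecidablePred (· ∈ G)]
    (A : Type*) [NonUnitalNonAssocRing A] [Module K A]
    [SMulCommClass K A A] [IsScalarTower K A A]
    (B : Type*) [NonUnitalRing B] [Module K B]
    [SMulCommClass K B B] [IsScalarTower K B B]
    (hA : ∀ x : Fin 3 → A,
      ∑ σ : G,
        (Equiv.Perm.sign (σ : Equiv.Perm (Fin 3)) : ℤ) •
          ((x ((σ : Equiv.Perm (Fin 3))⁻¹ 0) * x ((σ : Equiv.Perm (Fin 3))⁻¹ 1))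
              * x ((σ : Equiv.Perm (Fin 3))⁻¹ 2)
            - x ((σ : Equiv.Perm (Fin 3))⁻¹ 0)
              * (x ((σ : Equiv.Perm (Fin 3))⁻¹ 1) * x ((σ : Equiv.Perm (Fin 3))⁻¹ 2))) = 0)
    (hB : ∀ (y : Fin 3 → B) (σ : Equiv.Perm (Fin 3)), σ ∈ G →
      y 0 * y 1 * y 2 = y (σ 0) * y (σ 1) * y (σ 2)) :
    ∀ u : Fin 3 → A ⊗[K] B,
      ∑ σ : G,
        (Equiv.Perm.sign (σ : Equiv.Perm (Fin 3)) : ℤ) •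
          ((u ((σ : Equiv.Perm (Fin 3))⁻¹ 0) * u ((σ : Equiv.Perm (Fin 3))⁻¹ 1))
              * u ((σ : Equiv.Perm (Fin 3))⁻¹ 2)
            - u ((σ : Equiv.Perm (Fin 3))⁻¹ 0)
              * (u ((σ : Equiv.Perm (Fin 3))⁻¹ 1) * u ((σ : Equiv.Perm (Fin 3))⁻¹ 2))) = 0 := by
  have step : ∀ (i : Fin 3) (u : Fin 3 → A ⊗[K] B),
      (∀ a b, ∑ σ : G, (Equiv.Perm.sign (σ : Equiv.Perm (Fin 3)) : ℤ) •
        asc3 (σ : Equiv.Perm (Fin 3))⁻¹ (Function.update u i (a ⊗ₜ[K] b)) = 0) →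
      ∑ σ : G, (Equiv.Perm.sign (σ : Equiv.Perm (Fin 3)) : ℤ) •
        asc3 (σ : Equiv.Perm (Fin 3))⁻¹ u = 0 := by
    intro i u h
    have key : ∀ t, ∑ σ : G, (Equiv.Perm.sign (σ : Equiv.Perm (Fin 3)) : ℤ) •
        asc3 (σ : Equiv.Perm (Fin 3))⁻¹ (Function.update u i t) = 0 := by
      intro t
      induction t using TensorProduct.induction_on with
      | zero => simp only [asc3_update_zero, smul_zero, Finset.sum_const_zero]
      | tmul a b => exact h a b
      | add x y hx hy =>
        simp only [asc3_update_add, smul_add, Finset.sum_add_distrib]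
        rw [hx, hy, add_zero]
    simpa using key (u i)
  intro u
  change ∑ σ : G, (Equiv.Perm.sign (σ : Equiv.Perm (Fin 3)) : ℤ) •
        asc3 (σ : Equiv.Perm (Fin 3))⁻¹ u = 0
  refine step 0 u fun a0 b0 => step 1 _ fun a1 b1 => step 2 _ fun a2 b2 => ?_
  have hu : Function.update (Function.update (Function.update u 0 (a0 ⊗ₜ[K] b0)) 1
      (a1 ⊗ₜ[K] b1)) 2 (a2 ⊗ₜ[K] b2) = fun i => (![a0, a1, a2] i) ⊗ₜ[K] (![b0, b1, b2] i) := by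
    funext i
    fin_cases i <;> simp [Function.update]
  rw [hu]
  generalize ![a0, a1, a2] = x
  generalize ![b0, b1, b2] = y
  have ht : ∀ σ : G, asc3 (σ : Equiv.Perm (Fin 3))⁻¹ (fun i => x i ⊗ₜ[K] y i) =
      (TensorProduct.mk K A B).flip (y 0 * y 1 * y 2) (asc3 (σ : Equiv.Perm (Fin 3))⁻¹ x) := by
    intro σ
    rw [hB y _ (G.inv_mem σ.2)]
    simp only [asc3, Algebra.TensorProduct.tmul_mul_tmul, LinearMap.flip_apply,
      TensorProduct.mk_apply, TensorProduct.sub_tmul, mul_assoc]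
  simp only [ht, ← map_zsmul, ← map_sum]
  have := hA x
  change ∑ σ : G, (Equiv.Perm.sign (σ : Equiv.Perm (Fin 3)) : ℤ) •
        asc3 (σ : Equiv.Perm (Fin 3))⁻¹ x = 0 at this
  rw [this, map_zero]
end

section
/- Let K be a field of characteristic zero, A a Vinberg algebra over K, i.e. (x·y)·z − x·(y·z) = (y·x)·z − y·(x·z) for all x,y,z ∈ A, and B an associative K-algebra satisfying (y₁·y₂)·y₃ = (y₂·y₁)·y₃ for all y₁,y₂,y₃ ∈ B. Then the tensor product A⊗B, with multiplication (a₁⊗b₁)·(a₂⊗b₂) = (a₁·a₂)⊗(b₁·b₂), is a Vinberg algebra: (u₁·u₂)·u₃ − u₁·(u₂·u₃) = (u₂·u₁)·u₃ − u₂·(u₁·u₃) for all u₁,u₂,u₃ ∈ A⊗B. -/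
open TensorProduct

/-- If `A` is a Vinberg algebra and `B` an associative algebra with
`(y₁·y₂)·y₃ = (y₂·y₁)·y₃` (a `G₂^!`-algebra), then the tensor product `A ⊗ B`, with
multiplication `(a₁⊗b₁)·(a₂⊗b₂) = (a₁·a₂)⊗(b₁·b₂)`, is a Vinberg algebra. -/
theorem tensor_vinberg_with_g2_shriek
    (K : Type*) [Field K] [CharZero K]
    (A : Type*) [NonUnitalNonAssocRing A] [Module K A]
    [SMulCommClass K A A] [IsScalarTower K A A]
    (B : Type*) [NonUnitalRing B] [Module K B]
    [SMulCommClass K B B] [IsScalarTower K B B]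
    (hA : ∀ x y z : A, (x * y) * z - x * (y * z) = (y * x) * z - y * (x * z))
    (hB : ∀ y₁ y₂ y₃ : B, (y₁ * y₂) * y₃ = (y₂ * y₁) * y₃) :
    ∀ u₁ u₂ u₃ : A ⊗[K] B,
      (u₁ * u₂) * u₃ - u₁ * (u₂ * u₃) = (u₂ * u₁) * u₃ - u₂ * (u₁ * u₃) := by
  intro u₁ u₂ u₃
  induction u₁ using TensorProduct.induction_on with
  | zero => simp only [zero_mul, mul_zero]
  | add x y hx hy => simp only [add_mul, mul_add, add_sub_add_comm, hx, hy]
  | tmul a₁ b₁ =>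
    induction u₂ using TensorProduct.induction_on with
    | zero => simp only [zero_mul, mul_zero]
    | add x y hx hy => simp only [add_mul, mul_add, add_sub_add_comm, hx, hy]
    | tmul a₂ b₂ =>
      induction u₃ using TensorProduct.induction_on with
      | zero => simp only [mul_zero]
      | add x y hx hy => simp only [mul_add, add_sub_add_comm, hx, hy]
      | tmul a₃ b₃ =>
        simp only [Algebra.TensorProduct.tmul_mul_tmul]
        rw [← mul_assoc b₁, ← mul_assoc b₂, hB b₂ b₁ b₃, ← TensorProduct.sub_tmul,
          ← TensorProduct.sub_tmul, hA]
end

section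
/- Let K be a field of characteristic zero, A a Lie-admissible K-algebra, i.e. Σ_{σ∈Σ₃} ε(σ) A_μ(x_{σ⁻¹(1)}, x_{σ⁻¹(2)}, x_{σ⁻¹(3)}) = 0 for all x₁,x₂,x₃ ∈ A, and B an associative K-algebra whose triple products are totally symmetric: y₁·y₂·y₃ = y_{σ(1)}·y_{σ(2)}·y_{σ(3)} for all y₁,y₂,y₃ ∈ B and all σ ∈ Σ₃. Then the tensor product A⊗B, with multiplication (a₁⊗b₁)·(a₂⊗b₂) = (a₁·a₂)⊗(b₁·b₂), is Lie-admissible: Σ_{σ∈Σ₃} ε(σ) A_μ(u_{σ⁻¹(1)}, u_{σ⁻¹(2)}, u_{σ⁻¹(3)}) = 0 for all u₁,u₂,u₃ ∈ A⊗B. -/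
open TensorProduct

theorem sum_perm_three_s16 {M : Type*} [AddCommGroup M] (f : Fin 3 → Fin 3 → Fin 3 → M) :
    ∑ σ : Equiv.Perm (Fin 3), (Equiv.Perm.sign σ : ℤ) • f (σ⁻¹ 0) (σ⁻¹ 1) (σ⁻¹ 2)
      = f 0 1 2 - f 1 0 2 - f 0 2 1 - f 2 1 0 + f 1 2 0 + f 2 0 1 := by
  have h : (Finset.univ : Finset (Equiv.Perm (Fin 3))) =
    {1, Equiv.swap 0 1, Equiv.swap 1 2, Equiv.swap 0 2,
      Equiv.swap 0 1 * Equiv.swap 1 2, Equiv.swap 1 2 * Equiv.swap 0 1} := by decide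
  rw [h, Finset.sum_insert (by decide), Finset.sum_insert (by decide),
    Finset.sum_insert (by decide), Finset.sum_insert (by decide),
    Finset.sum_insert (by decide), Finset.sum_singleton]
  have e1 : (Equiv.swap (0 : Fin 3) 1) 2 = 2 := by decide
  have e2 : (Equiv.swap (1 : Fin 3) 2) 0 = 0 := by decide
  have e3 : (Equiv.swap (0 : Fin 3) 2) 1 = 1 := by decide
  have n1 : (0 : Fin 3) ≠ 1 := by decide
  have n2 : (1 : Fin 3) ≠ 2 := by decide
  have n3 : (0 : Fin 3) ≠ 2 := by decide
  simp [Equiv.Perm.sign_swap n1, Equiv.Perm.sign_swap n2, Equiv.Perm.sign_swap n3, e1, e2, e3]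
  abel

/-- If `A` is a Lie-admissible algebra and `B` an associative algebra
whose triple products are totally symmetric (a `G₆^!`-algebra), then the tensor product
`A ⊗ B`, with multiplication `(a₁⊗b₁)·(a₂⊗b₂) = (a₁·a₂)⊗(b₁·b₂)`, is Lie-admissible. -/
theorem tensor_lie_admissible_with_g6_shriek
    (K : Type*) [Field K] [CharZero K]
    (A : Type*) [NonUnitalNonAssocRing A] [Module K A]
    [SMulCommClass K A A] [IsScalarTower K A A]
    (B : Type*) [NonUnitalRing B] [Module K B]
    [SMulCommClass K B B] [IsScalarTower K B B]
    (hA : ∀ x : Fin 3 → A,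
      ∑ σ : Equiv.Perm (Fin 3),
        (Equiv.Perm.sign σ : ℤ) •
          ((x (σ⁻¹ 0) * x (σ⁻¹ 1)) * x (σ⁻¹ 2)
            - x (σ⁻¹ 0) * (x (σ⁻¹ 1) * x (σ⁻¹ 2))) = 0)
    (hB : ∀ (y : Fin 3 → B) (σ : Equiv.Perm (Fin 3)),
      y 0 * y 1 * y 2 = y (σ 0) * y (σ 1) * y (σ 2)) :
    ∀ u : Fin 3 → A ⊗[K] B,
      ∑ σ : Equiv.Perm (Fin 3),
        (Equiv.Perm.sign σ : ℤ) •
          ((u (σ⁻¹ 0) * u (σ⁻¹ 1)) * u (σ⁻¹ 2)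
            - u (σ⁻¹ 0) * (u (σ⁻¹ 1) * u (σ⁻¹ 2))) = 0 := by
  have pure : ∀ (a : Fin 3 → A) (b : Fin 3 → B),
      ∑ σ : Equiv.Perm (Fin 3),
        (Equiv.Perm.sign σ : ℤ) •
          (((a (σ⁻¹ 0) ⊗ₜ[K] b (σ⁻¹ 0)) * (a (σ⁻¹ 1) ⊗ₜ[K] b (σ⁻¹ 1))) *
              (a (σ⁻¹ 2) ⊗ₜ[K] b (σ⁻¹ 2))
            - (a (σ⁻¹ 0) ⊗ₜ[K] b (σ⁻¹ 0)) *
              ((a (σ⁻¹ 1) ⊗ₜ[K] b (σ⁻¹ 1)) * (a (σ⁻¹ 2) ⊗ₜ[K] b (σ⁻¹ 2)))) = 0 := by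
    intro a b
    have h := congrArg (fun t => t ⊗ₜ[K] (b 0 * b 1 * b 2)) (hA a)
    simp only [TensorProduct.sum_tmul, TensorProduct.zero_tmul] at h
    rw [← h]
    refine Finset.sum_congr rfl fun σ _ => ?_
    simp only [Algebra.TensorProduct.tmul_mul_tmul]
    rw [← mul_assoc (b _), ← hB b σ⁻¹, ← TensorProduct.sub_tmul, TensorProduct.smul_tmul']
  have key : ∀ u v w : A ⊗[K] B,
      (u * v * w - u * (v * w)) - (v * u * w - v * (u * w)) - (u * w * v - u * (w * v))
        - (w * v * u - w * (v * u)) + (v * w * u - v * (w * u))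
        + (w * u * v - w * (u * v)) = 0 := by
    intro u v w
    induction u using TensorProduct.induction_on with
    | zero => simp
    | add x y hx hy =>
      rw [← add_zero (0 : A ⊗[K] B)]
      nth_rewrite 1 [← hx]
      rw [← hy]
      simp only [add_mul, mul_add]
      abel
    | tmul a b =>
    induction v using TensorProduct.induction_on with
    | zero => simp
    | add x y hx hy =>
      rw [← add_zero (0 : A ⊗[K] B)]
      nth_rewrite 1 [← hx]
      rw [← hy]
      simp only [add_mul, mul_add]
      abel
    | tmul a' b' =>
    induction w using TensorProduct.induction_on with
    | zero => simp
    | add x y hx hy =>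
      rw [← add_zero (0 : A ⊗[K] B)]
      nth_rewrite 1 [← hx]
      rw [← hy]
      simp only [add_mul, mul_add]
      abel
    | tmul a'' b'' =>
      have h := pure ![a, a', a''] ![b, b', b'']
      rw [sum_perm_three_s16 (fun i j k =>
        ((![a, a', a''] i ⊗ₜ[K] ![b, b', b''] i) * (![a, a', a''] j ⊗ₜ[K] ![b, b', b''] j)) *
              (![a, a', a''] k ⊗ₜ[K] ![b, b', b''] k)
            - (![a, a', a''] i ⊗ₜ[K] ![b, b', b''] i) *
              ((![a, a', a''] j ⊗ₜ[K] ![b, b', b''] j) *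
                (![a, a', a''] k ⊗ₜ[K] ![b, b', b''] k)))] at h
      exact h
  intro u
  rw [sum_perm_three_s16 (fun i j k => u i * u j * u k - u i * (u j * u k))]
  exact key _ _ _
end
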